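/- arXiv:2001.11308 — 2 statements merged into one kernel-verified Lean document; each statement's English description precedes it below -/
import Mathlib

section
/- In the uncontrolled setting with an irreducible stochastic matrix P and invariant probability μ: for all 1 ≤ i ≠ j ≤ d, C_{i,j} + C_{j,i} = ((∑_{k=1}^d μ_k c̄_k)/μ_i) · ((Q^{(j,j)})^{-1})_{i^{(j)}, i^{(j)}}. -/
open Matrix


lemma aux_harm {d : ℕ} (P : Matrix (Fin d) (Fin d) ℝ)
    (hP0 : ∀ i j, 0 ≤ P i j) (hP1 : ∀ i, ∑ j, P i j = 1)
    (hirr : ∀ i j, ∃ k : ℕ, 1 ≤ k ∧ 0 < (P ^ k) i j)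
    (y : Fin d → ℝ) (hy : P *ᵥ y = y) (a b : Fin d) : y a = y b := by
  have hpow : ∀ (z : Fin d → ℝ), P *ᵥ z = z → ∀ k : ℕ, (P ^ k) *ᵥ z = z := by
    intro z hz k
    induction k with
    | zero => simp
    | succ k ih => rw [pow_succ, ← Matrix.mulVec_mulVec, hz, ih]
  have hnn : ∀ k : ℕ, ∀ i j, 0 ≤ (P ^ k) i j := by
    intro k
    induction k with
    | zero => intro i j; rw [pow_zero, Matrix.one_apply]; split_ifs <;> norm_num
    | succ k ih =>
      intro i j
      rw [pow_succ, Matrix.mul_apply]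
      exact Finset.sum_nonneg fun l _ => mul_nonneg (ih _ _) (hP0 _ _)
  have hone : P *ᵥ (fun _ => (1 : ℝ)) = fun _ => 1 := by
    funext i
    simp [Matrix.mulVec, dotProduct, hP1]
  haveI : Nonempty (Fin d) := ⟨a⟩
  obtain ⟨l, hl⟩ := Finite.exists_max y
  have key : ∀ m, y m = y l := by
    intro m
    obtain ⟨k, -, hk⟩ := hirr l m
    have h1 := congrFun (hpow _ hone k) l
    have h2 := congrFun (hpow _ hy k) l
    simp only [Matrix.mulVec, dotProduct, mul_one] at h1 h2
    have h3 : ∑ t, (P ^ k) l t * (y l - y t) = 0 := by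
      simp only [mul_sub, Finset.sum_sub_distrib, ← Finset.sum_mul, h1, h2]
      ring
    have h4 := (Finset.sum_eq_zero_iff_of_nonneg
      (fun t _ => mul_nonneg (hnn k l t) (sub_nonneg.2 (hl t)))).1 h3 m (Finset.mem_univ _)
    rcases mul_eq_zero.1 h4 with h | h <;> linarith
  rw [key a, key b]

lemma aux_sub {n : ℕ} (Q : Matrix (Fin (n + 2)) (Fin (n + 2)) ℝ) (j : Fin (n + 2))
    (y : Fin (n + 2) → ℝ) (hy : y j = 0) (l : Fin (n + 1)) :
    (Q *ᵥ y) (j.succAbove l) =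
      (Q.submatrix j.succAbove j.succAbove *ᵥ fun t => y (j.succAbove t)) l := by
  simp [Matrix.mulVec, dotProduct, Fin.sum_univ_succAbove _ j, hy]

lemma aux_mu {d : ℕ} (P : Matrix (Fin d) (Fin d) ℝ) (μ : Fin d → ℝ)
    (hμinv : ∀ j, ∑ i, μ i * P i j = μ j) (y : Fin d → ℝ) :
    ∑ i, μ i * ((1 - P) *ᵥ y) i = 0 := by
  have h : μ ᵥ* (1 - P) = 0 := by
    rw [Matrix.vecMul_sub, Matrix.vecMul_one]
    funext t
    simp [Matrix.vecMul, dotProduct, hμinv]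
  have := Matrix.dotProduct_mulVec μ (1 - P) y
  rw [h, zero_dotProduct] at this
  exact this

lemma aux_unit {n : ℕ} (P : Matrix (Fin (n + 2)) (Fin (n + 2)) ℝ) (μ : Fin (n + 2) → ℝ)
    (hP0 : ∀ i j, 0 ≤ P i j) (hP1 : ∀ i, ∑ j, P i j = 1)
    (hirr : ∀ i j, ∃ k : ℕ, 1 ≤ k ∧ 0 < (P ^ k) i j)
    (hμpos : ∀ i, 0 < μ i)
    (hμinv : ∀ j, ∑ i, μ i * P i j = μ j) (j : Fin (n + 2)) :
    IsUnit ((1 - P).submatrix j.succAbove j.succAbove).det := by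
  rw [isUnit_iff_ne_zero]
  intro h0
  obtain ⟨x, hx0, hx⟩ := Matrix.exists_mulVec_eq_zero_iff.2 h0
  apply hx0
  set y : Fin (n + 2) → ℝ := j.insertNth (α := fun _ => ℝ) 0 x with hyd
  have hyj : y j = 0 := by simp [hyd]
  have hyx : ∀ t, y (j.succAbove t) = x t := by intro t; simp [hyd]
  have hs : ∀ l, ((1 - P) *ᵥ y) (j.succAbove l) = 0 := by
    intro l
    rw [aux_sub _ _ _ hyj]
    simp only [hyx]
    exact congrFun hx l
  have hm := aux_mu P μ hμinv y
  rw [Fin.sum_univ_succAbove _ j] at hm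
  simp only [hs, mul_zero, Finset.sum_const_zero, add_zero] at hm
  have hj := (mul_eq_zero.1 hm).resolve_left (hμpos j).ne'
  have hQ : (1 - P) *ᵥ y = 0 := by
    funext t
    rcases Fin.eq_self_or_eq_succAbove j t with h | ⟨l, h⟩
    · rw [h]; exact hj
    · rw [h]; exact hs l
  rw [Matrix.sub_mulVec, Matrix.one_mulVec, sub_eq_zero] at hQ
  funext t
  rw [← hyx t, aux_harm P hP0 hP1 hirr y hQ.symm _ j, hyj]
  rfl

/-- Uncontrolled setting with an irreducible stochastic matrix `P`
(`d = n + 2`), invariant probability `μ`, cost vector `c̄` and cost matrix `C`.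
For all `i ≠ j` (every such `i` is `j.succAbove k` for a unique `k`, and `k = i^{(j)}`):
`C i j + C j i = ((∑ μ c̄) / μ i) * ((Q^{(j,j)})⁻¹)_{i^{(j)}, i^{(j)}}`. -/
theorem cost_roundtrip_eq_mean_cost_formula
    (n : ℕ)
    (P : Matrix (Fin (n + 2)) (Fin (n + 2)) ℝ)
    (c : Fin (n + 2) → ℝ) (μ : Fin (n + 2) → ℝ)
    (hP0 : ∀ i j, 0 ≤ P i j)
    (hP1 : ∀ i, ∑ j, P i j = 1)
    (hirr : ∀ i j, ∃ k : ℕ, 1 ≤ k ∧ 0 < (P ^ k) i j)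
    (hμpos : ∀ i, 0 < μ i)
    (hμsum : ∑ i, μ i = 1)
    (hμinv : ∀ j, ∑ i, μ i * P i j = μ j)
    (C : Fin (n + 2) → Fin (n + 2) → ℝ)
    (hCdiag : ∀ j, C j j = 0)
    (hCoff : ∀ (j : Fin (n + 2)) (k : Fin (n + 1)),
      C (j.succAbove k) j =
        (((1 - P).submatrix j.succAbove j.succAbove)⁻¹ *ᵥ fun l => c (j.succAbove l)) k) :
    ∀ (j : Fin (n + 2)) (k : Fin (n + 1)),
      C (j.succAbove k) j + C j (j.succAbove k) =
        ((∑ i, μ i * c i) / μ (j.succAbove k)) *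
          (((1 - P).submatrix j.succAbove j.succAbove)⁻¹ k k) := by
  have hU := aux_unit P μ hP0 hP1 hirr hμpos hμinv
  have hu : ∀ j t, ((1 - P) *ᵥ fun s => C s j) t =
      c t - if t = j then (∑ i, μ i * c i) / μ j else 0 := by
    intro j
    have hs : ∀ l, ((1 - P) *ᵥ fun s => C s j) (j.succAbove l) = c (j.succAbove l) := by
      intro l
      rw [aux_sub _ j (fun s => C s j) (hCdiag j)]
      simp only [hCoff]
      have := Matrix.mulVec_mulVec (fun l => c (j.succAbove l))
        ((1 - P).submatrix j.succAbove j.succAbove) ((1 - P).submatrix j.succAbove j.succAbove)⁻¹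
      rw [Matrix.mul_nonsing_inv _ (hU j), Matrix.one_mulVec] at this
      exact congrFun this l
    intro t
    rcases Fin.eq_self_or_eq_succAbove j t with h | ⟨l, h⟩
    · subst h
      have hm := aux_mu P μ hμinv (fun s => C s t)
      rw [Fin.sum_univ_succAbove _ t] at hm
      simp only [hs] at hm
      rw [Fin.sum_univ_succAbove (fun i => μ i * c i) t, if_pos rfl]
      have := (hμpos t).ne'
      field_simp
      linarith
    · subst h
      rw [hs, if_neg (Fin.succAbove_ne j l), sub_zero]
  intro j k
  set i := j.succAbove k with hi
  set m := ∑ i, μ i * c i with hmd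
  set G := (1 - P).submatrix j.succAbove j.succAbove with hG
  set w : Fin (n + 2) → ℝ := fun s => C s j - C s i + C j i with hw
  have hwj : w j = 0 := by simp [hw, hCdiag]
  have hone : (1 - P) *ᵥ (fun _ => C j i) = 0 := by
    rw [Matrix.sub_mulVec, Matrix.one_mulVec]
    funext t
    simp [Matrix.mulVec, dotProduct, ← Finset.sum_mul, hP1]
  have hwQ : (1 - P) *ᵥ w = ((1 - P) *ᵥ fun s => C s j) - ((1 - P) *ᵥ fun s => C s i) := by
    have : w = (fun s => C s j) - (fun s => C s i) + (fun _ => C j i) := rfl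
    rw [this, Matrix.mulVec_add, Matrix.mulVec_sub, hone, add_zero]
  have hGw : G *ᵥ (fun t => w (j.succAbove t)) = Pi.single k (m / μ i) := by
    funext l
    rw [hG, ← aux_sub _ _ _ hwj, hwQ, Pi.sub_apply, hu, hu, if_neg (Fin.succAbove_ne j l)]
    by_cases h : l = k
    · subst h; simp [hi, hmd]
    · have : j.succAbove l ≠ i := fun h' => h (Fin.succAbove_right_injective h')
      simp [h, this]
  have hfin := congrArg (fun v => G⁻¹ *ᵥ v) hGw
  simp only [Matrix.mulVec_mulVec] at hfin
  have hk := congrFun hfin k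
  rw [Matrix.nonsing_inv_mul _ (hU j), Matrix.one_mulVec] at hk
  simp only [Matrix.mulVec_single, ← hi] at hk
  simp [hw, hCdiag] at hk
  rw [hk]; ring
end

section
/- In the uncontrolled setting with an irreducible stochastic matrix P, the following assertions are equivalent: (i) the domain D is nonempty; (ii) for all 1 ≤ i, j, k ≤ d one has the triangle inequality C_{j,k} ≤ C_{j,i} + C_{i,k}; (iii) for every round trip of length at most d, i.e. every 1 ≤ n ≤ d and pairwise distinct indices i_1, …, i_n in {1,…,d}, one has ∑_{k=1}^{n−1} C_{i_k, i_{k+1}} + C_{i_n, i_1} ≥ 0. -/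
open Matrix

lemma aux_min {N : ℕ} (P : Matrix (Fin N) (Fin N) ℝ)
    (hP0 : ∀ i j, 0 ≤ P i j) (hP1 : ∀ i, ∑ j, P i j = 1)
    (hirr : ∀ i j, ∃ k : ℕ, 1 ≤ k ∧ 0 < (P ^ k) i j)
    (i : Fin N) (v : Fin N → ℝ) (hv : ∀ l, l ≠ i → ∑ j, P l j * v j ≤ v l) (l : Fin N) :
    v i ≤ v l := by
  obtain ⟨s, -, hs⟩ := Finset.exists_min_image Finset.univ v ⟨i, Finset.mem_univ i⟩
  have hs' : ∀ j, v s ≤ v j := fun j => hs j (Finset.mem_univ j)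
  by_contra hcon
  push Not at hcon
  have hi : v s < v i := lt_of_le_of_lt (hs' l) hcon
  have step : ∀ a b, v a = v s → 0 < P a b → v b = v s := by
    intro a b ha hab
    by_contra hb
    have hb' : v s < v b := lt_of_le_of_ne (hs' b) (Ne.symm hb)
    have hai : a ≠ i := by rintro rfl; linarith
    have h1 := hv a hai
    have h2 : ∑ j, P a j * v s < ∑ j, P a j * v j := by
      apply Finset.sum_lt_sum
      · intro j _
        exact mul_le_mul_of_nonneg_left (hs' j) (hP0 a j)
      · exact ⟨b, Finset.mem_univ b, mul_lt_mul_of_pos_left hb' hab⟩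
    rw [← Finset.sum_mul, hP1] at h2
    linarith
  have key : ∀ k : ℕ, ∀ b, (P ^ k) s b ≠ 0 → v b = v s := by
    intro k
    induction k with
    | zero =>
      intro b hb
      by_cases h : s = b
      · rw [h]
      · simp [Matrix.one_apply, h] at hb
    | succ k ih =>
      intro b hb
      rw [pow_succ, Matrix.mul_apply] at hb
      obtain ⟨a, -, ha⟩ := Finset.exists_ne_zero_of_sum_ne_zero hb
      have h1 := left_ne_zero_of_mul ha
      have h2 := right_ne_zero_of_mul ha
      exact step a b (ih a h1) (lt_of_le_of_ne (hP0 a b) (Ne.symm h2))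
  obtain ⟨k, -, hk⟩ := hirr s i
  have := key k i hk.ne'
  linarith

lemma aux_det {n : ℕ} (P : Matrix (Fin (n + 2)) (Fin (n + 2)) ℝ)
    (hP0 : ∀ i j, 0 ≤ P i j) (hP1 : ∀ i, ∑ j, P i j = 1)
    (hirr : ∀ i j, ∃ k : ℕ, 1 ≤ k ∧ 0 < (P ^ k) i j) (j : Fin (n + 2)) :
    ((1 - P).submatrix j.succAbove j.succAbove).det ≠ 0 := by
  intro h0
  obtain ⟨v, hv, hv0⟩ := Matrix.exists_mulVec_eq_zero_iff.2 h0
  apply hv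
  let w : Fin (n + 2) → ℝ := j.insertNth 0 v
  have hwj : w j = 0 := by simp [w]
  have hwk : ∀ k, w (j.succAbove k) = v k := by intro k; simp [w]
  have hw : ∀ l, l ≠ j → ∑ m, P l m * w m = w l := by
    intro l hl
    obtain ⟨k, rfl⟩ := Fin.exists_succAbove_eq hl
    have := congrFun hv0 k
    rw [Matrix.mulVec, dotProduct] at this
    simp [Matrix.one_apply, sub_mul, Finset.sum_sub_distrib] at this
    rw [Fin.sum_univ_succAbove _ j, hwj]
    simp only [hwk]
    linarith
  funext k
  have h1 := aux_min P hP0 hP1 hirr j w (fun l hl => (hw l hl).le) (j.succAbove k)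
  have h2 := aux_min P hP0 hP1 hirr j (fun l => - w l)
    (fun l hl => by simp [hw l hl]) (j.succAbove k)
  simp only [hwj, hwk] at h1 h2
  simp only [Pi.zero_apply]
  linarith

lemma aux_eq {n : ℕ} (P : Matrix (Fin (n + 2)) (Fin (n + 2)) ℝ) (c : Fin (n + 2) → ℝ)
    (hP0 : ∀ i j, 0 ≤ P i j) (hP1 : ∀ i, ∑ j, P i j = 1)
    (hirr : ∀ i j, ∃ k : ℕ, 1 ≤ k ∧ 0 < (P ^ k) i j)
    (C : Fin (n + 2) → Fin (n + 2) → ℝ)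
    (hCdiag : ∀ j, C j j = 0)
    (hCoff : ∀ (j : Fin (n + 2)) (k : Fin (n + 1)),
      C (j.succAbove k) j =
        (((1 - P).submatrix j.succAbove j.succAbove)⁻¹ *ᵥ fun l => c (j.succAbove l)) k)
    (i j : Fin (n + 2)) (hij : i ≠ j) : ∑ m, P i m * C m j = C i j - c i := by
  have hdet := aux_det P hP0 hP1 hirr j
  obtain ⟨k, rfl⟩ := Fin.exists_succAbove_eq hij
  have h : ((1 - P).submatrix j.succAbove j.succAbove) *ᵥ (fun k => C (j.succAbove k) j)
      = fun l => c (j.succAbove l) := by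
    have : (fun k => C (j.succAbove k) j) =
      (((1 - P).submatrix j.succAbove j.succAbove)⁻¹ *ᵥ fun l => c (j.succAbove l)) :=
      funext (hCoff j)
    rw [this, Matrix.mulVec_mulVec, Matrix.mul_nonsing_inv _ (isUnit_iff_ne_zero.2 hdet),
      Matrix.one_mulVec]
  have := congrFun h k
  rw [Matrix.mulVec, dotProduct] at this
  simp [Matrix.one_apply, sub_mul, Finset.sum_sub_distrib] at this
  rw [Fin.sum_univ_succAbove _ j, hCdiag]
  linarith

lemma aux_path {N : ℕ} (C : Fin N → Fin N → ℝ) (hd : ∀ j, C j j = 0)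
    (ht : ∀ i j k, C j k ≤ C j i + C i k) :
    ∀ m : ℕ, ∀ idx : Fin (m + 1) → Fin N,
      C (idx 0) (idx (Fin.last m)) ≤ ∑ k : Fin m, C (idx k.castSucc) (idx k.succ) := by
  intro m
  induction m with
  | zero => intro idx; simp [hd]
  | succ m ih =>
    intro idx
    rw [Fin.sum_univ_castSucc]
    have h1 := ih (fun k => idx k.castSucc)
    have h2 := ht (idx (Fin.last m).castSucc) (idx 0) (idx (Fin.last (m + 1)))
    simp only [Fin.castSucc_zero, Fin.succ_last, Fin.succ_castSucc] at h1 h2 ⊢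
    linarith

/-- Uncontrolled setting with an irreducible stochastic matrix `P`
(`d = n + 2`), cost vector `c̄`, cost matrix `C` and domain `D`.  The following are
equivalent:
(i) `D` is nonempty;
(ii) the triangle inequality `C j k ≤ C j i + C i k` holds for all `i, j, k`;
(iii) every round trip of length at most `d` has nonnegative cost: for all
`1 ≤ m + 1 ≤ d` and injective `idx : Fin (m+1) → Fin d`,
`∑_{k} C (idx k) (idx (k+1)) + C (idx last) (idx 0) ≥ 0`. -/
theorem nonempty_domain_triangle_roundtrip_tfae
    (n : ℕ)
    (P : Matrix (Fin (n + 2)) (Fin (n + 2)) ℝ)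
    (c : Fin (n + 2) → ℝ)
    (hP0 : ∀ i j, 0 ≤ P i j)
    (hP1 : ∀ i, ∑ j, P i j = 1)
    (hirr : ∀ i j, ∃ k : ℕ, 1 ≤ k ∧ 0 < (P ^ k) i j)
    (C : Fin (n + 2) → Fin (n + 2) → ℝ)
    (hCdiag : ∀ j, C j j = 0)
    (hCoff : ∀ (j : Fin (n + 2)) (k : Fin (n + 1)),
      C (j.succAbove k) j =
        (((1 - P).submatrix j.succAbove j.succAbove)⁻¹ *ᵥ fun l => c (j.succAbove l)) k)
    (D : Set (Fin (n + 2) → ℝ))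
    (hD : D = {x | ∀ i, (∑ j, P i j * x j) - c i ≤ x i}) :
    [D.Nonempty,
      ∀ i j k : Fin (n + 2), C j k ≤ C j i + C i k,
      ∀ m : ℕ, m + 1 ≤ n + 2 → ∀ idx : Fin (m + 1) → Fin (n + 2),
        Function.Injective idx →
          0 ≤ (∑ k : Fin m, C (idx k.castSucc) (idx k.succ)) +
            C (idx (Fin.last m)) (idx 0)].TFAE := by
  have hC := aux_eq P c hP0 hP1 hirr C hCdiag hCoff
  have hmin := aux_min P hP0 hP1 hirr
  have hsum : ∀ (l i k : Fin (n + 2)), ∑ m, P l m * (C m i - C m k + C i k) =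
      ∑ m, P l m * C m i - ∑ m, P l m * C m k + C i k := by
    intro l i k
    simp only [mul_add, mul_sub, Finset.sum_add_distrib, Finset.sum_sub_distrib]
    rw [← Finset.sum_mul, hP1, one_mul]
  tfae_have 1 → 2 := by
    rintro ⟨x, hx⟩ i j k
    rw [hD] at hx
    have hx' : ∀ i, (∑ j, P i j * x j) - c i ≤ x i := hx
    by_cases hik : i = k
    · subst hik; rw [hCdiag]; linarith
    have hlam : 0 ≤ c k + ∑ m, P k m * C m k := by
      by_contra hcon
      push Not at hcon
      have hs : ∀ l, ∑ m, P l m * (x m + C m k) = ∑ m, P l m * x m + ∑ m, P l m * C m k := by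
        intro l; simp only [mul_add, Finset.sum_add_distrib]
      have hk : ∑ m, P k m * (x m + C m k) < x k + C k k := by
        rw [hs, hCdiag]
        have := hx' k
        linarith
      have hu : ∀ l, ∑ m, P l m * (x m + C m k) ≤ x l + C l k := by
        intro l
        by_cases hl : l = k
        · subst hl; exact hk.le
        · rw [hs, hC l k hl]
          have := hx' l
          linarith
      have hconst : ∀ m, x k + C k k ≤ x m + C m k :=
        fun m => hmin k (fun m => x m + C m k) (fun l _ => hu l) m
      have h2 : ∑ m, P k m * (x k + C k k) ≤ ∑ m, P k m * (x m + C m k) :=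
        Finset.sum_le_sum fun m _ => mul_le_mul_of_nonneg_left (hconst m) (hP0 k m)
      rw [← Finset.sum_mul, hP1] at h2
      linarith
    have hv := hmin i (fun m => C m i - C m k + C i k) (by
      intro l hl
      rw [hsum, hC l i hl]
      by_cases hlk : l = k
      · subst hlk
        simp only [hCdiag]
        linarith
      · rw [hC l k hlk]
        linarith) j
    simp only [hCdiag] at hv
    linarith
  tfae_have 2 → 3 := by
    intro ht m _ idx _
    have h1 := aux_path C hCdiag ht m idx
    have h2 := ht (idx (Fin.last m)) (idx 0) (idx 0)
    rw [hCdiag] at h2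
    linarith
  tfae_have 3 → 1 := by
    intro h3
    have h01 : (1 : Fin (n + 2)) ≠ 0 := by simp
    have hrt : 0 ≤ C 0 1 + C 1 0 := by
      have := h3 1 (by omega) ![0, 1] (by
        intro a b hab
        fin_cases a <;> fin_cases b <;> simp_all)
      simpa using this
    by_cases hlam : 0 ≤ c 0 + ∑ m, P 0 m * C m 0
    · refine ⟨fun m => - C m 0, ?_⟩
      rw [hD]
      intro l
      simp only [mul_neg, Finset.sum_neg_distrib]
      by_cases hl : l = 0
      · subst hl
        rw [hCdiag]
        linarith
      · rw [hC l 0 hl]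
        linarith
    · exfalso
      push Not at hlam
      have hneg : ∀ j, C j 1 - C j 0 + C 1 0 ≤ 0 := by
        intro j
        have hv := hmin 1 (fun m => -(C m 1 - C m 0 + C 1 0)) (by
          intro l hl
          simp only [mul_neg, Finset.sum_neg_distrib]
          rw [hsum, hC l 1 hl]
          by_cases hlk : l = 0
          · subst hlk
            simp only [hCdiag]
            linarith
          · rw [hC l 0 hlk]
            linarith) j
        simp only [hCdiag] at hv
        linarith
      have h4 : ∑ m, P 0 m * (C m 1 - C m 0 + C 1 0) ≤ 0 :=
        Finset.sum_nonpos fun m _ => mul_nonpos_of_nonneg_of_nonpos (hP0 0 m) (hneg m)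
      rw [hsum, hC 0 1 h01.symm] at h4
      linarith
  tfae_finish
end
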